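/- Let f(x,y) = x² + b₀x³+b₁x²y+b₂xy²+c₀x⁴+c₁x³y+c₂x²y²+c₃xy³+c₄y⁴ + h.o.t. be a hyperbolic cusp of Gauss (b₂² − 4c₄ > 0). Then the zero level set f = 0 has exactly two smooth branches through the origin, both tangent to x = 0, with expansions x = −(1/2)(b₂ − √(b₂²−4c₄)) y² + O(y³) and x = −(1/2)(b₂ + √(b₂²−4c₄)) y² + O(y³). -/

import Mathlib

open Topology Asymptotics Filter

/-- Partial derivative with respect to the first variable. -/
noncomputable def px (f : ℝ → ℝ → ℝ) : ℝ → ℝ → ℝ := fun x y => deriv (fun x' => f x' y) x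

/-- Partial derivative with respect to the second variable. -/
noncomputable def py (f : ℝ → ℝ → ℝ) : ℝ → ℝ → ℝ := fun x y => deriv (fun y' => f x y') y

/-- The vertex function `V_f`. -/
noncomputable def Vf (f : ℝ → ℝ → ℝ) (x y : ℝ) : ℝ :=
  (px f x y ^ 2 + py f x y ^ 2) *
      (-(py f x y ^ 3) * px (px (px f)) x y + 3 * px f x y * py f x y ^ 2 * py (px (px f)) x y
        - 3 * px f x y ^ 2 * py f x y * py (py (px f)) x y + px f x y ^ 3 * py (py (py f)) x y)
  + 3 * px f x y * py f x y *
      (py f x y ^ 2 * px (px f) x y ^ 2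
        + (px f x y ^ 2 + py f x y ^ 2) * px (px f) x y * py (py f) x y
        - px f x y ^ 2 * py (py f) x y ^ 2)
  + 6 * px f x y * py f x y * py (px f) x y ^ 2 * (px f x y ^ 2 - py f x y ^ 2)
  + 3 * py (px f) x y *
      (px (px f) x y * py f x y ^ 4
        - 3 * px f x y ^ 2 * py f x y ^ 2 * (px (px f) x y - py (py f) x y)
        - py (py f) x y * px f x y ^ 4)

/-- The inflexion (Hessian-type) function `I_f`. -/
noncomputable def Infl (f : ℝ → ℝ → ℝ) (x y : ℝ) : ℝ :=
  px (px f) x y * py f x y ^ 2 - 2 * py (px f) x y * px f x y * py f x y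
    + py (py f) x y * px f x y ^ 2

/-- Curvature of the graph `y = h x`. -/
noncomputable def curvGraph (h : ℝ → ℝ) (x : ℝ) : ℝ :=
  deriv (deriv h) x / (1 + (deriv h x) ^ 2) ^ ((3 : ℝ) / 2)

/-!
Substitute `x = z y²`. Every monomial of `f` then acquires a factor `y⁴`, and so does the remainder
by Hadamard division, so `f (z y², y) = y⁴ F (y, z)` with `F` smooth and
`F (0, z) = z² + b₂ z + c₄`. This quadratic has two simple roots, and the implicit function theorem
continues them to functions `ζ₁`, `ζ₂` of `y`; the branches are `x = ζᵢ y · y²`. There are no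
others: a zero of `f` near the origin satisfies `|x| ≤ K y²`, because `x²` dominates the other terms
when `|x|` is large compared with `y²`, so it suffices to consider `z` in the compact interval
`[-K, K]`, on which the zeros of `F (y, ·)` for small `y` are all close to those of `F (0, ·)`.
-/

universe u

section ParametricIntegral

theorem exists_eventually_forall_norm_lt_of_isCompact {X Y F : Type*} [TopologicalSpace X]
    [TopologicalSpace Y] [SeminormedAddCommGroup F] {g : X × Y → F} (hg : Continuous g)
    {K : Set Y} (hK : IsCompact K) (x₀ : X) :
    ∃ C, ∀ᶠ x in 𝓝 x₀, ∀ t ∈ K, ‖g (x, t)‖ < C := by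
  obtain ⟨C, hC⟩ := hK.exists_bound_of_continuousOn
    (f := fun t => g (x₀, t)) (Continuous.continuousOn (by fun_prop))
  refine ⟨C + 1, hK.eventually_forall_of_forall_eventually fun t ht => ?_⟩
  exact hg.norm.continuousAt.eventually_lt_const ((hC t ht).trans_lt (lt_add_one C))

variable {a b : ℝ}

theorem hasFDerivAt_intervalIntegral_of_contDiff {E F : Type*} [NormedAddCommGroup E]
    [NormedSpace ℝ E] [NormedAddCommGroup F] [NormedSpace ℝ F] {g : E × ℝ → F}
    (hg : ContDiff ℝ 1 g) (x₀ : E) :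
    HasFDerivAt (fun x => ∫ t in a..b, g (x, t))
      (∫ t in a..b, fderiv ℝ g (x₀, t) ∘L .inl ℝ E ℝ) x₀ := by
  have hg_cont : Continuous g := hg.continuous
  have hg'_cont : Continuous fun p => fderiv ℝ g p ∘L .inl ℝ E ℝ :=
    (hg.continuous_fderiv one_ne_zero).clm_comp continuous_const
  obtain ⟨C, hC⟩ :=
    exists_eventually_forall_norm_lt_of_isCompact hg'_cont (isCompact_uIcc (a := a) (b := b)) x₀
  refine intervalIntegral.hasFDerivAt_integral_of_dominated_of_fderiv_le (bound := fun _ => C)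
    (F' := fun x t => fderiv ℝ g (x, t) ∘L .inl ℝ E ℝ) hC ?_ ?_ ?_ ?_ ?_ ?_
  · exact .of_forall fun x => Continuous.aestronglyMeasurable (by fun_prop)
  · exact Continuous.intervalIntegrable (by fun_prop) _ _
  · exact (hg'_cont.comp (Continuous.prodMk_right x₀)).aestronglyMeasurable
  · exact .of_forall fun t ht x hx => (hx t (Set.uIoc_subset_uIcc ht)).le
  · exact intervalIntegrable_const
  · exact .of_forall fun t _ x _ =>
      (hg.differentiable one_ne_zero (x, t)).hasFDerivAt.comp x (hasFDerivAt_prodMk_left x t)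

-- `E` and `F` share a universe because the induction step replaces `F` by `E →L[ℝ] F`.
theorem contDiff_nat_intervalIntegral {E F : Type u} [NormedAddCommGroup E] [NormedSpace ℝ E]
    [NormedAddCommGroup F] [NormedSpace ℝ F] {n : ℕ} {g : E × ℝ → F} (hg : ContDiff ℝ n g) :
    ContDiff ℝ n fun x => ∫ t in a..b, g (x, t) := by
  induction n generalizing F with
  | zero =>
    exact contDiff_zero.2 <|
      intervalIntegral.continuous_parametric_intervalIntegral_of_continuous'
        (f := fun x t => g (x, t)) hg.continuous a b
  | succ n ih =>
    push_cast at hg ⊢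
    have hg' : ContDiff ℝ n fun p => fderiv ℝ g p ∘L .inl ℝ E ℝ :=
      (hg.fderiv_right le_rfl).clm_comp contDiff_const
    exact contDiff_succ_iff_hasFDerivAt.2 ⟨_, ih hg', hasFDerivAt_intervalIntegral_of_contDiff
      (hg.of_le le_add_self)⟩

theorem contDiff_intervalIntegral {E F : Type u} [NormedAddCommGroup E] [NormedSpace ℝ E]
    [NormedAddCommGroup F] [NormedSpace ℝ F] {n : ℕ∞} {g : E × ℝ → F} (hg : ContDiff ℝ n g) :
    ContDiff ℝ n fun x => ∫ t in a..b, g (x, t) :=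
  contDiff_iff_forall_nat_le.2 fun _ hm =>
    contDiff_nat_intervalIntegral (hg.of_le (mod_cast hm))

end ParametricIntegral

section IsLittleOPow

variable {𝕜 F : Type*} [NontriviallyNormedField 𝕜] [NormedAddCommGroup F]

theorem eq_zero_of_isLittleO_pow {g : 𝕜 → F} (hg : ContinuousAt g 0) {k : ℕ}
    (ho : g =o[𝓝[≠] 0] fun y : 𝕜 => y ^ k) : g 0 = 0 := by
  have hpow : (fun y : 𝕜 => y ^ k) =O[𝓝[≠] 0] fun _ => (1 : 𝕜) :=
    ((continuous_pow k).continuousAt.isBigO_one 𝕜).mono nhdsWithin_le_nhds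
  exact tendsto_nhds_unique (hg.mono_left nhdsWithin_le_nhds)
    ((isLittleO_one_iff 𝕜).1 (ho.trans_isBigO hpow))

theorem isLittleO_pow_of_smul_isLittleO_pow_succ [NormedSpace 𝕜 F] {g : 𝕜 → F} {k : ℕ}
    (ho : (fun y => y • g y) =o[𝓝[≠] 0] fun y : 𝕜 => y ^ (k + 1)) :
    g =o[𝓝[≠] 0] fun y : 𝕜 => y ^ k := by
  have hdiv := (isBigO_refl (fun y : 𝕜 => y⁻¹) (𝓝[≠] 0)).smul_isLittleO ho
  refine hdiv.congr' ?_ ?_ <;> filter_upwards [self_mem_nhdsWithin] with y (hy : y ≠ 0)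
  · exact inv_smul_smul₀ hy (g y)
  · rw [smul_eq_mul, pow_succ']
    field_simp

end IsLittleOPow

section HadamardDivision

variable {E F : Type u} [NormedAddCommGroup E] [NormedSpace ℝ E] [NormedAddCommGroup F]
  [NormedSpace ℝ F] {G : ℝ × E → F}

theorem smul_integral_fderiv_fst_eq_sub [CompleteSpace F] (hG : ContDiff ℝ 1 G) (y : ℝ) (z : E) :
    y • ∫ t in (0 : ℝ)..1, fderiv ℝ G (t * y, z) (1, 0) = G (y, z) - G (0, z) := by
  have hderiv (t : ℝ) :
      HasDerivAt (fun t => G (t * y, z)) (y • fderiv ℝ G (t * y, z) (1, 0)) t := by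
    have hcurve : HasDerivAt (fun t : ℝ => (t * y, z)) (y • ((1 : ℝ), (0 : E))) t := by
      simpa using ((hasDerivAt_id t).mul_const y).prodMk (hasDerivAt_const t z)
    simpa only [map_smul] using!
      (hG.differentiable one_ne_zero (t * y, z)).hasFDerivAt.comp_hasDerivAt t hcurve
  have hcont : Continuous fun t : ℝ => y • fderiv ℝ G (t * y, z) (1, 0) := by
    have := hG.continuous_fderiv one_ne_zero
    fun_prop
  rw [← intervalIntegral.integral_smul, intervalIntegral.integral_eq_sub_of_hasDerivAt
    (fun t _ => hderiv t) (hcont.intervalIntegrable 0 1), one_mul, zero_mul]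

theorem exists_contDiff_eq_smul [CompleteSpace F] {n : ℕ∞} (hG : ContDiff ℝ (n + 1 : ℕ∞) G)
    (hG0 : ∀ z, G (0, z) = 0) :
    ∃ H : ℝ × E → F, ContDiff ℝ n H ∧ ∀ y z, G (y, z) = y • H (y, z) := by
  have hintegrand : ContDiff ℝ n fun p : (ℝ × E) × ℝ => fderiv ℝ G (p.2 * p.1.1, p.1.2) (1, 0) := by
    have : ContDiff ℝ n (fderiv ℝ G) := hG.fderiv_right (by norm_cast)
    fun_prop
  refine ⟨_, contDiff_intervalIntegral (a := 0) (b := 1) hintegrand, fun y z => ?_⟩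
  rw [smul_integral_fderiv_fst_eq_sub (hG.of_le (mod_cast le_add_self)), hG0, sub_zero]

theorem exists_contDiff_eq_pow_smul [CompleteSpace F] {n : ℕ∞} {k : ℕ}
    (hG : ContDiff ℝ (n + k : ℕ∞) G)
    (ho : ∀ z, (fun y => G (y, z)) =o[𝓝[≠] 0] fun y : ℝ => y ^ k) :
    ∃ H : ℝ × E → F, ContDiff ℝ n H ∧ (∀ y z, G (y, z) = y ^ k • H (y, z)) ∧
      ∀ z, H (0, z) = 0 := by
  have hG0 (z : E) : G (0, z) = 0 :=
    eq_zero_of_isLittleO_pow (hG.continuous.comp (Continuous.prodMk_left z)).continuousAt (ho z)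
  induction k generalizing G with
  | zero => exact ⟨G, by simpa using hG, by simp, hG0⟩
  | succ k ih =>
    obtain ⟨G₁, hG₁, hGG₁⟩ := exists_contDiff_eq_smul (n := n + k)
      (by simpa only [Nat.cast_succ, add_assoc] using hG) hG0
    have ho₁ (z : E) : (fun y => G₁ (y, z)) =o[𝓝[≠] 0] fun y : ℝ => y ^ k :=
      isLittleO_pow_of_smul_isLittleO_pow_succ (by simpa only [hGG₁] using ho z)
    obtain ⟨H, hH, hG₁H, hH0⟩ := ih hG₁ ho₁ fun z =>
      eq_zero_of_isLittleO_pow (hG₁.continuous.comp (Continuous.prodMk_left z)).continuousAt (ho₁ z)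
    exact ⟨H, hH, fun y z => by rw [hGG₁, hG₁H, smul_smul, pow_succ'], hH0⟩

end HadamardDivision

section ImplicitFunction

theorem exists_contDiff_eventuallyEq {E F : Type*} [NormedAddCommGroup E] [NormedSpace ℝ E]
    [HasContDiffBump E] [NormedAddCommGroup F] [NormedSpace ℝ F] {n : ℕ∞} {f : E → F} {x₀ : E}
    (hf : ∀ᶠ x in 𝓝 x₀, ContDiffAt ℝ n f x) :
    ∃ g : E → F, ContDiff ℝ n g ∧ g =ᶠ[𝓝 x₀] f := by
  obtain ⟨r, hr, hball⟩ := Metric.nhds_basis_closedBall.mem_iff.1 hf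
  let χ : ContDiffBump x₀ := ⟨r / 2, r, half_pos hr, half_lt_self hr⟩
  refine ⟨fun x => χ x • f x, contMDiff_iff_contDiff.1 (contMDiff_of_tsupport fun x hx => ?_), ?_⟩
  · have hx' : x ∈ Metric.closedBall x₀ r := χ.tsupport_eq ▸ tsupport_smul_subset_left χ f hx
    exact contMDiffAt_iff_contDiffAt.2 (χ.contDiffAt.smul (hball hx'))
  · filter_upwards [χ.eventuallyEq_one] with x hx
    rw [hx, Pi.one_apply, one_smul]

variable {𝕜 E₁ E₂ F : Type*} [RCLike 𝕜] [NormedAddCommGroup E₁] [NormedSpace 𝕜 E₁]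
  [NormedAddCommGroup E₂] [NormedSpace 𝕜 E₂] [NormedAddCommGroup F] [NormedSpace 𝕜 F]

theorem isInvertible_fderiv_comp_inr_of_hasDerivAt {f : E₁ × 𝕜 → 𝕜} {x : E₁} {z d : 𝕜}
    (hf : DifferentiableAt 𝕜 f (x, z)) (hd : HasDerivAt (fun w => f (x, w)) d z) (hd0 : d ≠ 0) :
    (fderiv 𝕜 f (x, z) ∘L .inr 𝕜 E₁ 𝕜).IsInvertible := by
  have hpartial : fderiv 𝕜 f (x, z) (0, 1) = d :=
    (hf.hasFDerivAt.comp_hasDerivAt z ((hasDerivAt_const z x).prodMk (hasDerivAt_id z))).unique hd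
  refine ⟨ContinuousLinearEquiv.unitsEquivAut 𝕜 (Units.mk0 d hd0), ?_⟩
  ext
  simp [hpartial]

variable [CompleteSpace E₂]

theorem eventually_isInvertible_fderiv_comp_inr {f : E₁ × E₂ → F} {u : E₁ × E₂}
    (hf : ContDiffAt 𝕜 1 f u) (hinv : (fderiv 𝕜 f u ∘L .inr 𝕜 E₁ E₂).IsInvertible) :
    ∀ᶠ v in 𝓝 u, (fderiv 𝕜 f v ∘L .inr 𝕜 E₁ E₂).IsInvertible := by
  have hcont : ContinuousAt (fun v => fderiv 𝕜 f v ∘L .inr 𝕜 E₁ E₂) u :=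
    (hf.continuousAt_fderiv one_ne_zero).clm_comp continuousAt_const
  exact hcont.eventually (ContinuousLinearEquiv.isOpen.mem_nhds hinv)

variable [CompleteSpace E₁] [CompleteSpace F]

theorem contDiffAt_of_eventually_apply_eq {n : WithTop ℕ∞} {f : E₁ × E₂ → F} {ψ : E₁ → E₂} {x : E₁}
    (hn : n ≠ 0) (hf : ContDiffAt 𝕜 n f (x, ψ x))
    (hinv : (fderiv 𝕜 f (x, ψ x) ∘L .inr 𝕜 E₁ E₂).IsInvertible) (hψ : ContinuousAt ψ x)
    (hfψ : ∀ᶠ x' in 𝓝 x, f (x', ψ x') = f (x, ψ x)) :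
    ContDiffAt 𝕜 n ψ x := by
  have hgraph : Tendsto (fun x' => (x', ψ x')) (𝓝 x) (𝓝 (x, ψ x)) := continuousAt_id.prodMk hψ
  refine (hf.contDiffAt_implicitFunction hn hinv).congr_of_eventuallyEq ?_
  filter_upwards [hfψ, hgraph.eventually (hf.eventually_apply_eq_iff_implicitFunction hn hinv)]
    with x' hfx' huniq
  exact (huniq.1 hfx').symm

-- For `n = ∞`, `ContDiffAt` at `u.1` does not spread to a neighbourhood, so the implicit function
-- theorem is applied again at every nearby point of the graph.
theorem eventually_contDiffAt_implicitFunction {n : WithTop ℕ∞} {f : E₁ × E₂ → F} {u : E₁ × E₂}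
    (hn : n ≠ 0) (hf : ∀ᶠ v in 𝓝 u, ContDiffAt 𝕜 n f v)
    (hinv : (fderiv 𝕜 f u ∘L .inr 𝕜 E₁ E₂).IsInvertible) :
    ∀ᶠ x in 𝓝 u.1, ContDiffAt 𝕜 n (hf.self_of_nhds.implicitFunction hn hinv) x := by
  have hfu := hf.self_of_nhds
  set ψ := hfu.implicitFunction hn hinv
  have hψ : ContDiffAt 𝕜 n ψ u.1 := hfu.contDiffAt_implicitFunction hn hinv
  have hgraph : Tendsto (fun x => (x, ψ x)) (𝓝 u.1) (𝓝 u) := by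
    have hψu : ψ u.1 = u.2 := hfu.implicitFunction_apply_self hn hinv
    simpa only [ContinuousAt, id, hψu] using! continuousAt_id.prodMk hψ.continuousAt
  have hone : (1 : WithTop ℕ∞) ≤ n := ENat.one_le_iff_ne_zero_withTop.2 hn
  filter_upwards [hgraph.eventually hf,
    hgraph.eventually (eventually_isInvertible_fderiv_comp_inr (hfu.of_le hone) hinv),
    (hψ.of_le hone).eventually (by simp),
    (hfu.eventually_apply_implicitFunction hn hinv).eventually_nhds] with x hfx hinvx hψx hconst
  exact contDiffAt_of_eventually_apply_eq hn hfx hinvx hψx.continuousAt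
    (hconst.mono fun x' hx' => hx'.trans hconst.self_of_nhds.symm)

end ImplicitFunction

section RootBranches

variable {E₁ E₂ F : Type*} [NormedAddCommGroup E₁] [NormedSpace ℝ E₁] [CompleteSpace E₁]
  [HasContDiffBump E₁] [NormedAddCommGroup E₂] [NormedSpace ℝ E₂] [CompleteSpace E₂]
  [NormedAddCommGroup F] [NormedSpace ℝ F] [CompleteSpace F] {n : ℕ∞} {f : E₁ × E₂ → F}

theorem exists_contDiff_eventually_apply_eq_iff {u : E₁ × E₂} (hn : n ≠ 0)
    (hf : ∀ᶠ v in 𝓝 u, ContDiffAt ℝ n f v)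
    (hinv : (fderiv ℝ f u ∘L .inr ℝ E₁ E₂).IsInvertible) :
    ∃ ψ : E₁ → E₂, ContDiff ℝ n ψ ∧ ψ u.1 = u.2 ∧ ∀ᶠ v in 𝓝 u, f v = f u ↔ v.2 = ψ v.1 := by
  have hn' : (n : WithTop ℕ∞) ≠ 0 := mod_cast hn
  have hfu := hf.self_of_nhds
  obtain ⟨ψ, hψ, hψ_eq⟩ :=
    exists_contDiff_eventuallyEq (eventually_contDiffAt_implicitFunction hn' hf hinv)
  refine ⟨ψ, hψ, hψ_eq.self_of_nhds.trans (hfu.implicitFunction_apply_self hn' hinv), ?_⟩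
  filter_upwards [continuousAt_fst.eventually hψ_eq,
    hfu.eventually_apply_eq_iff_implicitFunction hn' hinv] with v hv hiff
  rw [hiff, hv, eq_comm]

theorem exists_contDiff_root_branches {x₀ : E₁} (hn : n ≠ 0) (hf : ContDiff ℝ n f)
    (hsimple : ∀ w, f (x₀, w) = 0 → (fderiv ℝ f (x₀, w) ∘L .inr ℝ E₁ E₂).IsInvertible) :
    ∃ ζ : E₂ → E₁ → E₂, ∀ w, f (x₀, w) = 0 →
      ContDiff ℝ n (ζ w) ∧ ζ w x₀ = w ∧ ∀ᶠ v in 𝓝 (x₀, w), f v = 0 ↔ v.2 = ζ w v.1 := by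
  have hbranch (w : E₂) : ∃ ψ : E₁ → E₂, f (x₀, w) = 0 →
      ContDiff ℝ n ψ ∧ ψ x₀ = w ∧ ∀ᶠ v in 𝓝 (x₀, w), f v = 0 ↔ v.2 = ψ v.1 := by
    by_cases hw : f (x₀, w) = 0
    · obtain ⟨ψ, hψ⟩ := exists_contDiff_eventually_apply_eq_iff hn
        (.of_forall fun _ => hf.contDiffAt) (hsimple w hw)
      exact ⟨ψ, fun _ => by simpa only [hw] using hψ⟩
    · exact ⟨0, fun h => absurd h hw⟩
  choose ζ hζ using hbranch
  exact ⟨ζ, hζ⟩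

end RootBranches

theorem eventually_apply_graph_eq_zero {X Y Z : Type*} [TopologicalSpace X] [TopologicalSpace Y]
    [Zero Z] {f : X × Y → Z} {ζ : X → Y} {x₀ : X} (hζ : ContinuousAt ζ x₀)
    (hiff : ∀ᶠ v in 𝓝 (x₀, ζ x₀), f v = 0 ↔ v.2 = ζ v.1) :
    ∀ᶠ x in 𝓝 x₀, f (x, ζ x) = 0 := by
  have hgraph : Tendsto (fun x => (x, ζ x)) (𝓝 x₀) (𝓝 (x₀, ζ x₀)) := continuousAt_id.prodMk hζ
  filter_upwards [hgraph.eventually hiff] with x hx using hx.2 rfl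

theorem eventually_forall_mem_eq_root_of_isCompact {X Y Z : Type*} [TopologicalSpace X]
    [TopologicalSpace Y] [TopologicalSpace Z] [T1Space Z] [Zero Z] {f : X × Y → Z}
    {ζ : Y → X → Y} {x₀ : X} {K : Set Y} (hK : IsCompact K) (hf : Continuous f)
    (hiff : ∀ w, f (x₀, w) = 0 → ∀ᶠ v in 𝓝 (x₀, w), f v = 0 ↔ v.2 = ζ w v.1) :
    ∀ᶠ x in 𝓝 x₀, ∀ z ∈ K, f (x, z) = 0 → ∃ w, f (x₀, w) = 0 ∧ z = ζ w x := by
  refine hK.eventually_forall_of_forall_eventually fun w _ => ?_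
  by_cases hw : f (x₀, w) = 0
  · filter_upwards [hiff w hw] with v hv hfv using ⟨w, hw, hv.1 hfv⟩
  · filter_upwards [hf.continuousAt.eventually_ne hw] with v hv hfv using absurd hfv hv

section BlowUp

variable {E F : Type u} [NormedAddCommGroup E] [NormedSpace ℝ E] [NormedAddCommGroup F]
  {R : E × ℝ → F} {k m : ℕ}

theorem isLittleO_comp_pow_smul (hm : m ≠ 0) (ho : R =o[𝓝 0] fun p => ‖p‖ ^ k) (z : E) :
    (fun y : ℝ => R (y ^ m • z, y)) =o[𝓝 0] fun y : ℝ => y ^ k := by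
  have hpow : (fun y : ℝ => y ^ m • z) =O[𝓝 0] fun y : ℝ => y := by
    have hdiff : DifferentiableAt ℝ (fun y : ℝ => y ^ m • z) 0 := by fun_prop
    simpa [hm] using hdiff.isBigO_sub
  have htendsto : Tendsto (fun y : ℝ => (y ^ m • z, y)) (𝓝 0) (𝓝 0) := by
    refine Continuous.tendsto' (by fun_prop) _ _ ?_
    simp [hm]
  exact (ho.comp_tendsto htendsto).trans_isBigO ((hpow.prod_left (isBigO_refl _ _)).norm_left.pow k)

theorem exists_contDiff_comp_pow_smul_eq_pow_smul [NormedSpace ℝ F] [CompleteSpace F] {n : ℕ∞}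
    (hm : m ≠ 0) (hR : ContDiff ℝ (n + k : ℕ∞) R) (ho : R =o[𝓝 0] fun p => ‖p‖ ^ k) :
    ∃ H : ℝ × E → F, ContDiff ℝ n H ∧ (∀ y z, R (y ^ m • z, y) = y ^ k • H (y, z)) ∧
      ∀ z, H (0, z) = 0 :=
  exists_contDiff_eq_pow_smul (G := fun v => R (v.1 ^ m • v.2, v.1)) (by fun_prop)
    fun z => (isLittleO_comp_pow_smul hm ho z).mono nhdsWithin_le_nhds

end BlowUp

section Derivatives

variable {𝕜 : Type*} [NontriviallyNormedField 𝕜]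

theorem hasDerivAt_mul_id_zero {g : 𝕜 → 𝕜} (hg : ContinuousAt g 0) :
    HasDerivAt (fun y => g y * y) (g 0) 0 := by
  refine hasDerivAt_iff_tendsto_slope.2 ((hg.mono_left nhdsWithin_le_nhds).congr' ?_)
  filter_upwards [self_mem_nhdsWithin] with y (hy : y ≠ 0)
  simp [slope_def_field, hy]

variable {ζ : 𝕜 → 𝕜}

theorem deriv_mul_sq_zero (hζ : ContinuousAt ζ 0) : deriv (fun y => ζ y * y ^ 2) 0 = 0 := by
  have h := hasDerivAt_mul_id_zero (hζ.mul continuousAt_id)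
  simpa [pow_two, mul_assoc] using h.deriv

theorem deriv_mul_sq (hζ : Differentiable 𝕜 ζ) :
    deriv (fun y => ζ y * y ^ 2) = fun y => (deriv ζ y * y + 2 * ζ y) * y := by
  ext y
  refine ((hζ y).hasDerivAt.fun_mul (hasDerivAt_pow 2 y)).deriv.trans ?_
  push_cast
  ring

theorem deriv_deriv_mul_sq_zero (hζ : ContDiff 𝕜 1 ζ) :
    deriv (deriv fun y => ζ y * y ^ 2) 0 = 2 * ζ 0 := by
  have hcont : Continuous fun y => deriv ζ y * y + 2 * ζ y := by
    have := hζ.continuous_deriv_one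
    have := hζ.continuous
    fun_prop
  rw [deriv_mul_sq (hζ.differentiable one_ne_zero),
    (hasDerivAt_mul_id_zero hcont.continuousAt).deriv, mul_zero, zero_add]

end Derivatives

section AprioriBound

theorem le_max_mul_of_mul_sq_le {α β γ s t : ℝ} (hα : 0 < α) (hγ : 0 ≤ γ)
    (hs : 0 ≤ s) (h : α * t ^ 2 ≤ β * t * s + γ * s ^ 2) : t ≤ max 1 ((β + γ) / α) * s := by
  rcases le_or_gt t s with hts | hst
  · exact hts.trans (le_mul_of_one_le_left hs (le_max_left _ _))
  · have hlin : t * α ≤ (β + γ) * s := by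
      nlinarith [mul_nonneg hγ (mul_nonneg hs (sub_nonneg.2 hst.le)), hs.trans_lt hst]
    calc t ≤ (β + γ) / α * s := by rwa [div_mul_eq_mul_div, le_div_iff₀ hα]
      _ ≤ max 1 ((β + γ) / α) * s := by gcongr; exact le_max_right _ _

theorem norm_prod_pow_four_le (x y : ℝ) : ‖(x, y)‖ ^ 4 ≤ x ^ 4 + y ^ 4 := by
  rw [Prod.norm_mk]
  rcases max_choice ‖x‖ ‖y‖ with h | h <;>
    rw [h, Real.norm_eq_abs, (show Even 4 by decide).pow_abs] <;>
    linarith [(show Even 4 by decide).pow_nonneg x, (show Even 4 by decide).pow_nonneg y]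

theorem exists_eventually_abs_fst_le_of_eq_zero {A B S : ℝ × ℝ → ℝ} (hA : ContinuousAt A 0)
    (hA0 : A 0 ≠ 0) (hB : B =O[𝓝 0] fun _ => (1 : ℝ)) (hS : S =O[𝓝 0] fun p => ‖p‖ ^ 4) :
    ∃ K, ∀ᶠ p : ℝ × ℝ in 𝓝 0,
      p.1 ^ 2 * A p + p.1 * p.2 ^ 2 * B p + S p = 0 → |p.1| ≤ K * p.2 ^ 2 := by
  obtain ⟨b, -, hb⟩ := hB.exists_nonneg
  obtain ⟨c, hc, hSc⟩ := hS.exists_nonneg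
  have hA0_pos : 0 < |A 0| := abs_pos.2 hA0
  have hsmall : ∀ᶠ p : ℝ × ℝ in 𝓝 0, c * p.1 ^ 2 < |A 0| / 4 := by
    refine Tendsto.eventually_lt_const (by positivity) (Continuous.tendsto' (by fun_prop) _ _ ?_)
    simp
  refine ⟨max 1 ((b + c) / (|A 0| / 4)), ?_⟩
  filter_upwards [hA.abs.eventually_const_lt (half_lt_self hA0_pos), hb.bound, hSc.bound, hsmall]
    with ⟨x, y⟩ hAp hBp hSp hxp hzero
  simp only [norm_one, mul_one, norm_pow, norm_norm, Real.norm_eq_abs (B _),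
    Real.norm_eq_abs (S _)] at hBp hSp hxp hzero
  refine le_max_mul_of_mul_sq_le (by positivity) hc (sq_nonneg y) ?_
  have htriangle : x ^ 2 * |A (x, y)| ≤ |x| * y ^ 2 * |B (x, y)| + |S (x, y)| := by
    calc x ^ 2 * |A (x, y)| = |-(x * y ^ 2 * B (x, y)) - S (x, y)| := by
          rw [← abs_sq x, ← abs_mul]; congr 1; linarith
      _ ≤ |-(x * y ^ 2 * B (x, y))| + |S (x, y)| := abs_sub _ _
      _ = |x| * y ^ 2 * |B (x, y)| + |S (x, y)| := by
          rw [abs_neg, abs_mul, abs_mul, abs_sq]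
  have hlower : |A 0| / 2 * x ^ 2 ≤ x ^ 2 * |A (x, y)| := by nlinarith [sq_nonneg x]
  have hBterm : |x| * y ^ 2 * |B (x, y)| ≤ b * |x| * y ^ 2 := by
    nlinarith [mul_nonneg (abs_nonneg x) (sq_nonneg y)]
  have hSterm : |S (x, y)| ≤ |A 0| / 4 * x ^ 2 + c * (y ^ 2) ^ 2 := by
    calc |S (x, y)| ≤ c * (x ^ 4 + y ^ 4) :=
          hSp.trans (mul_le_mul_of_nonneg_left (norm_prod_pow_four_le x y) hc)
      _ = c * x ^ 2 * x ^ 2 + c * (y ^ 2) ^ 2 := by ring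
      _ ≤ |A 0| / 4 * x ^ 2 + c * (y ^ 2) ^ 2 := by gcongr
  rw [sq_abs]
  linarith

end AprioriBound

theorem exists_pos_forall_of_eventually_nhds_zero {P : ℝ → Prop} {Q : ℝ × ℝ → Prop}
    (hP : ∀ᶠ y in 𝓝 0, P y) (hQ : ∀ᶠ p in 𝓝 0, Q p) :
    ∃ ε > 0, (∀ y, |y| < ε → P y) ∧ ∀ x y, x ^ 2 + y ^ 2 < ε ^ 2 → Q (x, y) := by
  obtain ⟨ε₁, hε₁, hP⟩ := Metric.eventually_nhds_iff.1 hP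
  obtain ⟨ε₂, hε₂, hQ⟩ := Metric.eventually_nhds_iff.1 hQ
  have hε : 0 < min ε₁ ε₂ := lt_min hε₁ hε₂
  refine ⟨min ε₁ ε₂, hε, fun y hy => hP ?_, fun x y hxy => hQ ?_⟩
  · simpa using hy.trans_le (min_le_left _ _)
  · have hx : |x| < min ε₁ ε₂ := abs_lt_of_sq_lt_sq (by linarith [sq_nonneg y]) hε.le
    have hy : |y| < min ε₁ ε₂ := abs_lt_of_sq_lt_sq (by linarith [sq_nonneg x]) hε.le
    rw [dist_zero_right, Prod.norm_mk]
    exact (max_lt hx hy).trans_le (min_le_right _ _)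

section Branches

variable {n : ℕ∞} {f : ℝ → ℝ → ℝ} {F : ℝ × ℝ → ℝ} {ζ : ℝ → ℝ → ℝ} {m k : ℕ} {K : ℝ}

theorem eventually_eq_zero_iff_exists_branch (hm : m ≠ 0)
    (hfF : ∀ y z, f (z * y ^ m) y = y ^ k * F (y, z))
    (hbound : ∀ᶠ p : ℝ × ℝ in 𝓝 0, f p.1 p.2 = 0 → |p.1| ≤ K * |p.2 ^ m|)
    (hne : {w | F (0, w) = 0}.Nonempty)
    (hroots : ∀ᶠ y in 𝓝 0, ∀ z ∈ Set.Icc (-K) K, F (y, z) = 0 → ∃ w, F (0, w) = 0 ∧ z = ζ w y)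
    (hζ : ∀ᶠ y in 𝓝 0, ∀ w, F (0, w) = 0 → F (y, ζ w y) = 0) :
    ∀ᶠ p : ℝ × ℝ in 𝓝 0, f p.1 p.2 = 0 ↔ ∃ w, F (0, w) = 0 ∧ p.1 = ζ w p.2 * p.2 ^ m := by
  have hsnd : Tendsto Prod.snd (𝓝 (0 : ℝ × ℝ)) (𝓝 0) := continuousAt_snd
  filter_upwards [hbound, hsnd.eventually hroots, hsnd.eventually hζ] with ⟨x, y⟩ hxy hy hζy
  dsimp only at hxy hy hζy ⊢
  constructor
  · intro hfxy
    rcases eq_or_ne y 0 with rfl | hy0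
    · obtain ⟨w, hw⟩ := hne
      have hx : x = 0 := by simpa [hm] using hxy hfxy
      exact ⟨w, hw, by simp [hx, hm]⟩
    · have hym : 0 < |y ^ m| := abs_pos.2 (pow_ne_zero m hy0)
      have hx : x / y ^ m * y ^ m = x := div_mul_cancel₀ x (pow_ne_zero m hy0)
      have hmem : x / y ^ m ∈ Set.Icc (-K) K := by
        rw [Set.mem_Icc, ← abs_le, abs_div, div_le_iff₀ hym]
        exact hxy hfxy
      have hFxy : F (y, x / y ^ m) = 0 := by
        have := hfF y (x / y ^ m)
        rw [hx, hfxy] at this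
        simpa [hy0] using this.symm
      obtain ⟨w, hw, hwx⟩ := hy _ hmem hFxy
      exact ⟨w, hw, by rw [← hwx, hx]⟩
  · rintro ⟨w, hw, rfl⟩
    rw [hfF, hζy w hw, mul_zero]

theorem exists_contDiff_branches_of_blowUp (hn : n ≠ 0) (hm : m ≠ 0) (hF : ContDiff ℝ n F)
    (hfF : ∀ y z, f (z * y ^ m) y = y ^ k * F (y, z))
    (hne : {w | F (0, w) = 0}.Nonempty) (hfin : {w | F (0, w) = 0}.Finite)
    (hsimple : ∀ w, F (0, w) = 0 → deriv (fun z => F (0, z)) w ≠ 0)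
    (hbound : ∀ᶠ p : ℝ × ℝ in 𝓝 0, f p.1 p.2 = 0 → |p.1| ≤ K * |p.2 ^ m|) :
    ∃ ζ : ℝ → ℝ → ℝ,
      (∀ w, F (0, w) = 0 → ContDiff ℝ n (ζ w) ∧ ζ w 0 = w) ∧
      (∀ᶠ y in 𝓝 0, ∀ w, F (0, w) = 0 → f (ζ w y * y ^ m) y = 0) ∧
      ∀ᶠ p : ℝ × ℝ in 𝓝 0, f p.1 p.2 = 0 ↔ ∃ w, F (0, w) = 0 ∧ p.1 = ζ w p.2 * p.2 ^ m := by
  have hdiff : Differentiable ℝ F := hF.differentiable (mod_cast hn)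
  obtain ⟨ζ, hζ⟩ := exists_contDiff_root_branches (x₀ := 0) hn hF fun w hw =>
    isInvertible_fderiv_comp_inr_of_hasDerivAt (hdiff (0, w))
      (DifferentiableAt.hasDerivAt (by fun_prop)) (hsimple w hw)
  have hζ_zero : ∀ᶠ y in 𝓝 0, ∀ w, F (0, w) = 0 → F (y, ζ w y) = 0 := by
    refine (eventually_all_finite hfin).2 fun w hw => ?_
    obtain ⟨hsmooth, hζ0, hiff⟩ := hζ w hw
    exact eventually_apply_graph_eq_zero hsmooth.continuous.continuousAt (by rwa [hζ0])
  refine ⟨ζ, fun w hw => ⟨(hζ w hw).1, (hζ w hw).2.1⟩, ?_, ?_⟩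
  · filter_upwards [hζ_zero] with y hy w hw
    rw [hfF, hy w hw, mul_zero]
  · exact eventually_eq_zero_iff_exists_branch hm hfF hbound hne
      (eventually_forall_mem_eq_root_of_isCompact isCompact_Icc hF.continuous
        fun w hw => (hζ w hw).2.2) hζ_zero

end Branches

section NormalForm

variable {n : ℕ∞} {f : ℝ → ℝ → ℝ} {A B C R : ℝ × ℝ → ℝ}

theorem exists_contDiff_blowUp_eq_quadratic (hA : ContDiff ℝ n A) (hB : ContDiff ℝ n B)
    (hC : ContDiff ℝ n C) (hR : ContDiff ℝ (n + 4 : ℕ∞) R) (ho : R =o[𝓝 0] fun p => ‖p‖ ^ 4)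
    (hf : ∀ x y, f x y =
      x ^ 2 * A (x, y) + x * y ^ 2 * B (x, y) + y ^ 4 * C (x, y) + R (x, y)) :
    ∃ F : ℝ × ℝ → ℝ, ContDiff ℝ n F ∧ (∀ y z, f (z * y ^ 2) y = y ^ 4 * F (y, z)) ∧
      ∀ z, F (0, z) = A 0 * z ^ 2 + B 0 * z + C 0 := by
  obtain ⟨H, hH, hRH, hH0⟩ := exists_contDiff_comp_pow_smul_eq_pow_smul two_ne_zero hR ho
  refine ⟨fun v => v.2 ^ 2 * A (v.2 * v.1 ^ 2, v.1) + v.2 * B (v.2 * v.1 ^ 2, v.1)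
    + C (v.2 * v.1 ^ 2, v.1) + H v, by fun_prop, fun y z => ?_, fun z => ?_⟩
  · have hremainder : R (z * y ^ 2, y) = y ^ 4 * H (y, z) := by
      simpa only [smul_eq_mul, mul_comm (y ^ 2)] using hRH y z
    rw [hf, hremainder]
    ring
  · have hzero : (z * 0 ^ 2, (0 : ℝ)) = 0 := by simp
    simp only [hzero, hH0]
    ring

theorem exists_eventually_abs_fst_le_sq_of_apply_eq_zero (hA : ContinuousAt A 0) (hA0 : A 0 ≠ 0)
    (hB : ContinuousAt B 0) (hC : ContinuousAt C 0) (hR : R =O[𝓝 0] fun p => ‖p‖ ^ 4)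
    (hf : ∀ x y, f x y =
      x ^ 2 * A (x, y) + x * y ^ 2 * B (x, y) + y ^ 4 * C (x, y) + R (x, y)) :
    ∃ K, ∀ᶠ p : ℝ × ℝ in 𝓝 0, f p.1 p.2 = 0 → |p.1| ≤ K * |p.2 ^ 2| := by
  have hCterm : (fun p : ℝ × ℝ => p.2 ^ 4 * C p) =O[𝓝 0] fun p => ‖p‖ ^ 4 := by
    simpa using (isBigO_snd_prod'.norm_right.pow 4).mul (hC.isBigO_one ℝ)
  obtain ⟨K, hK⟩ :=
    exists_eventually_abs_fst_le_of_eq_zero hA hA0 (hB.isBigO_one ℝ) (hCterm.add hR)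
  refine ⟨K, hK.mono fun p hp hfp => ?_⟩
  rw [abs_sq]
  exact hp (by rw [← hfp, hf]; ring)

theorem exists_contDiff_branches_of_quadratic {z₁ z₂ : ℝ} (hn : n ≠ 0) (hA : ContDiff ℝ n A)
    (hB : ContDiff ℝ n B) (hC : ContDiff ℝ n C) (hR : ContDiff ℝ (n + 4 : ℕ∞) R)
    (ho : R =o[𝓝 0] fun p => ‖p‖ ^ 4)
    (hf : ∀ x y, f x y =
      x ^ 2 * A (x, y) + x * y ^ 2 * B (x, y) + y ^ 4 * C (x, y) + R (x, y))
    (hA0 : A 0 ≠ 0) (hz : z₁ ≠ z₂)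
    (hfactor : ∀ z, A 0 * z ^ 2 + B 0 * z + C 0 = A 0 * ((z - z₁) * (z - z₂))) :
    ∃ ζ₁ ζ₂ : ℝ → ℝ, (ContDiff ℝ n ζ₁ ∧ ζ₁ 0 = z₁) ∧ (ContDiff ℝ n ζ₂ ∧ ζ₂ 0 = z₂) ∧
      (∀ᶠ y in 𝓝 0, f (ζ₁ y * y ^ 2) y = 0 ∧ f (ζ₂ y * y ^ 2) y = 0) ∧
      ∀ᶠ p : ℝ × ℝ in 𝓝 0,
        f p.1 p.2 = 0 ↔ p.1 = ζ₁ p.2 * p.2 ^ 2 ∨ p.1 = ζ₂ p.2 * p.2 ^ 2 := by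
  obtain ⟨F, hF, hfF, hF0⟩ := exists_contDiff_blowUp_eq_quadratic hA hB hC hR ho hf
  obtain ⟨K, hK⟩ := exists_eventually_abs_fst_le_sq_of_apply_eq_zero hA.continuous.continuousAt hA0
    hB.continuous.continuousAt hC.continuous.continuousAt ho.isBigO hf
  have hroot (w : ℝ) : F (0, w) = 0 ↔ w = z₁ ∨ w = z₂ := by
    rw [hF0, hfactor]
    simp [hA0, sub_eq_zero]
  have hsimple (w : ℝ) (hw : F (0, w) = 0) : deriv (fun z => F (0, z)) w ≠ 0 := by
    have hderiv : deriv (fun z => F (0, z)) w = A 0 * ((w - z₂) + (w - z₁)) := by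
      simp [hF0, hfactor]
    rw [hderiv]
    rcases (hroot w).1 hw with rfl | rfl
    · simp [hA0, sub_ne_zero.2 hz]
    · simp [hA0, sub_ne_zero.2 hz.symm]
  have hne : {w | F (0, w) = 0}.Nonempty := ⟨z₁, (hroot z₁).2 (.inl rfl)⟩
  have hfin : {w | F (0, w) = 0}.Finite := by
    simpa only [hroot] using! Set.toFinite {z₁, z₂}
  obtain ⟨ζ, hζ, hzero, hiff⟩ :=
    exists_contDiff_branches_of_blowUp hn two_ne_zero hF hfF hne hfin hsimple hK
  simp only [hroot, forall_eq_or_imp, forall_eq, exists_eq_or_imp, exists_eq_left] at hζ hzero hiff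
  exact ⟨ζ z₁, ζ z₂, hζ.1, hζ.2, hzero, hiff⟩

end NormalForm

theorem hyperbolic_cusp_of_gauss_level_branches_general {n : ℕ∞} (hn : n ≠ 0)
    (f R : ℝ → ℝ → ℝ)
    (b0 b1 b2 c0 c1 c2 c3 c4 : ℝ) (hcog : 0 < b2 ^ 2 - 4 * c4)
    (hfR : ∀ x y, f x y = x ^ 2 + b0 * x ^ 3 + b1 * x ^ 2 * y + b2 * x * y ^ 2
      + c0 * x ^ 4 + c1 * x ^ 3 * y + c2 * x ^ 2 * y ^ 2 + c3 * x * y ^ 3 + c4 * y ^ 4 + R x y)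
    (hR : ContDiff ℝ (n + 4 : ℕ∞) (fun p : ℝ × ℝ => R p.1 p.2))
    (hRo : (fun p : ℝ × ℝ => R p.1 p.2) =o[𝓝 (0 : ℝ × ℝ)] fun p => ‖p‖ ^ 4) :
    ∃ ε > (0 : ℝ), ∃ φ1 φ2 : ℝ → ℝ,
      ContDiff ℝ n φ1 ∧ ContDiff ℝ n φ2
      ∧ φ1 0 = 0 ∧ deriv φ1 0 = 0 ∧ φ2 0 = 0 ∧ deriv φ2 0 = 0
      ∧ deriv (deriv φ1) 0 / 2 = -(1 / 2) * (b2 - Real.sqrt (b2 ^ 2 - 4 * c4))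
      ∧ deriv (deriv φ2) 0 / 2 = -(1 / 2) * (b2 + Real.sqrt (b2 ^ 2 - 4 * c4))
      ∧ (∀ y : ℝ, |y| < ε → f (φ1 y) y = 0 ∧ f (φ2 y) y = 0)
      ∧ ∀ x y : ℝ, x ^ 2 + y ^ 2 < ε ^ 2 → (f x y = 0 ↔ x = φ1 y ∨ x = φ2 y) := by
  have hD : √(b2 ^ 2 - 4 * c4) ^ 2 = b2 ^ 2 - 4 * c4 := Real.sq_sqrt hcog.le
  have hD_pos : 0 < √(b2 ^ 2 - 4 * c4) := Real.sqrt_pos.2 hcog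
  obtain ⟨ζ₁, ζ₂, ⟨hζ₁, hζ₁0⟩, ⟨hζ₂, hζ₂0⟩, hzero, hiff⟩ :=
    exists_contDiff_branches_of_quadratic (f := f) (R := fun p => R p.1 p.2)
      (A := fun p => 1 + b0 * p.1 + b1 * p.2 + c0 * p.1 ^ 2 + c1 * p.1 * p.2 + c2 * p.2 ^ 2)
      (B := fun p => b2 + c3 * p.2) (C := fun _ => c4)
      (z₁ := -(1 / 2) * (b2 - √(b2 ^ 2 - 4 * c4))) (z₂ := -(1 / 2) * (b2 + √(b2 ^ 2 - 4 * c4)))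
      hn (by fun_prop) (by fun_prop) (by fun_prop) hR hRo
      (fun x y => by rw [hfR]; ring) (by simp) (by linarith)
      (fun z => by simp only [Prod.fst_zero, Prod.snd_zero]; linear_combination hD / 4)
  obtain ⟨ε, hε, hzero, hiff⟩ := exists_pos_forall_of_eventually_nhds_zero hzero hiff
  have hone : (1 : WithTop ℕ∞) ≤ n := mod_cast Order.one_le_iff_ne_zero.2 hn
  have hderiv₂ {ζ : ℝ → ℝ} (hζ : ContDiff ℝ n ζ) :
      deriv (deriv fun y => ζ y * y ^ 2) 0 / 2 = ζ 0 := by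
    rw [deriv_deriv_mul_sq_zero (hζ.of_le hone), mul_div_cancel_left₀ _ two_ne_zero]
  exact ⟨ε, hε, fun y => ζ₁ y * y ^ 2, fun y => ζ₂ y * y ^ 2, by fun_prop, by fun_prop,
    by simp, deriv_mul_sq_zero hζ₁.continuous.continuousAt,
    by simp, deriv_mul_sq_zero hζ₂.continuous.continuousAt,
    (hderiv₂ hζ₁).trans hζ₁0, (hderiv₂ hζ₂).trans hζ₂0, hzero, hiff⟩

theorem hyperbolic_cusp_of_gauss_level_branches (f R : ℝ → ℝ → ℝ)
    (b0 b1 b2 c0 c1 c2 c3 c4 : ℝ) (hcog : 0 < b2 ^ 2 - 4 * c4)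
    (hfR : ∀ x y, f x y = x ^ 2 + b0 * x ^ 3 + b1 * x ^ 2 * y + b2 * x * y ^ 2
      + c0 * x ^ 4 + c1 * x ^ 3 * y + c2 * x ^ 2 * y ^ 2 + c3 * x * y ^ 3 + c4 * y ^ 4 + R x y)
    (hR : ContDiff ℝ (⊤ : ℕ∞) (fun p : ℝ × ℝ => R p.1 p.2))
    (hRo : (fun p : ℝ × ℝ => R p.1 p.2) =o[𝓝 (0 : ℝ × ℝ)] fun p => ‖p‖ ^ 4) :
    ∃ ε > (0 : ℝ), ∃ φ1 φ2 : ℝ → ℝ,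
      ContDiff ℝ (⊤ : ℕ∞) φ1 ∧ ContDiff ℝ (⊤ : ℕ∞) φ2
      ∧ φ1 0 = 0 ∧ deriv φ1 0 = 0 ∧ φ2 0 = 0 ∧ deriv φ2 0 = 0
      ∧ deriv (deriv φ1) 0 / 2 = -(1 / 2) * (b2 - Real.sqrt (b2 ^ 2 - 4 * c4))
      ∧ deriv (deriv φ2) 0 / 2 = -(1 / 2) * (b2 + Real.sqrt (b2 ^ 2 - 4 * c4))
      ∧ (∀ y : ℝ, |y| < ε → f (φ1 y) y = 0 ∧ f (φ2 y) y = 0)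
      ∧ ∀ x y : ℝ, x ^ 2 + y ^ 2 < ε ^ 2 → (f x y = 0 ↔ x = φ1 y ∨ x = φ2 y) := by
  exact hyperbolic_cusp_of_gauss_level_branches_general (n := ⊤) (by simp) f R
    b0 b1 b2 c0 c1 c2 c3 c4 hcog hfR (by simpa using hR) hRo
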